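/- Let ρ = |ψ⟩⟨ψ| be an n-qubit pure state and S ⊆ Fin n a nonempty subset with |S| = s. With U = ⊗_{i∈S} U_i a product of independent Haar-random elements of U(2) and P_U(z) = tr(U ρ U† |z⟩⟨z|) the Born probability of outcome z : S → Fin 2, the concentratable entanglement satisfies C_ψ(S) = 1 − (3/2)^s · Σ_{z ∈ {0,1}^S} E_U[P_U(z)²], where the sum is over all 2^s bitstrings z and E_U denotes integration over the product Haar measure. -/

import Mathlib

open Matrix MeasureTheory
open scoped BigOperators ComplexConjugate Kronecker

/-- `n`-qubit operators: matrices indexed by functions `Fin n → Fin 2`. -/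
abbrev QMat (n : ℕ) : Type := Matrix (Fin n → Fin 2) (Fin n → Fin 2) ℂ

/-- Combine an assignment on `α` and one on its complement into a full index. -/
noncomputable def embedIdx {n : ℕ} (α : Finset (Fin n)) (i : {x : Fin n // x ∈ α} → Fin 2)
    (k : {x : Fin n // x ∉ α} → Fin 2) : Fin n → Fin 2 :=
  fun x => if h : x ∈ α then i ⟨x, h⟩ else k ⟨x, h⟩

/-- The reduced density matrix on the qubits in `α` (partial trace over the rest). -/
noncomputable def reduced {n : ℕ} (ρ : QMat n) (α : Finset (Fin n)) :
    Matrix ({x : Fin n // x ∈ α} → Fin 2) ({x : Fin n // x ∈ α} → Fin 2) ℂ :=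
  fun i j => ∑ k : ({x : Fin n // x ∉ α} → Fin 2), ρ (embedIdx α i k) (embedIdx α j k)

/-- The concentratable entanglement `C_ψ(S) = 1 - 2^{-|S|} ∑_{α ⊆ S} tr(ρ_α²)`. -/
noncomputable def CE {n : ℕ} (ρ : QMat n) (S : Finset (Fin n)) : ℝ :=
  1 - (1 / 2 : ℝ) ^ S.card *
    ∑ α ∈ S.powerset, (Matrix.trace (reduced ρ α * reduced ρ α)).re

/-- Tensor product of single-qubit operators on the qubits in `S`, identity elsewhere. -/
noncomputable def localOp {n : ℕ} (S : Finset (Fin n))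
    (V : {i : Fin n // i ∈ S} → Matrix (Fin 2) (Fin 2) ℂ) : QMat n :=
  fun x y => ∏ i : Fin n,
    if h : i ∈ S then V ⟨i, h⟩ (x i) (y i)
    else (if x i = y i then 1 else 0)

/-- Projector onto computational basis state `z` on the qubits in `S`, identity elsewhere. -/
noncomputable def projZ {n : ℕ} (S : Finset (Fin n)) (z : {i : Fin n // i ∈ S} → Fin 2) : QMat n :=
  fun x y => ∏ i : Fin n,
    if h : i ∈ S then (if x i = z ⟨i, h⟩ ∧ y i = z ⟨i, h⟩ then 1 else 0)
    else (if x i = y i then 1 else 0)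

noncomputable instance : MeasurableSpace (Matrix.unitaryGroup (Fin 2) ℂ) := borel _
instance : BorelSpace (Matrix.unitaryGroup (Fin 2) ℂ) := ⟨rfl⟩

/-- The Born probability `P_U(z) = tr(U ρ U† |z⟩⟨z|)` of outcome `z` after the local
randomized measurement given by the single-qubit unitaries `V i`, `i ∈ S`. -/
noncomputable def born {n : ℕ} (ρ : QMat n) (S : Finset (Fin n))
    (V : {i : Fin n // i ∈ S} → Matrix.unitaryGroup (Fin 2) ℂ)
    (z : {i : Fin n // i ∈ S} → Fin 2) : ℝ :=
  (Matrix.trace (localOp S (fun i => (V i : Matrix (Fin 2) (Fin 2) ℂ)) * ρ *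
      (localOp S (fun i => (V i : Matrix (Fin 2) (Fin 2) ℂ)))ᴴ * projZ S z)).re

instance compactSpace_unitaryGroup {m : Type*} [Fintype m] [DecidableEq m] :
    CompactSpace (Matrix.unitaryGroup m ℂ) := by
  have hc : IsCompact
      (Set.univ.pi fun _ : m => Set.univ.pi fun _ : m => Metric.closedBall (0 : ℂ) 1) :=
    isCompact_univ_pi fun _ => isCompact_univ_pi fun _ => isCompact_closedBall _ _
  have : IsCompact (unitary (Matrix m m ℂ) : Set (Matrix m m ℂ)) :=
    hc.of_isClosed_subset (isClosed_unitary (R := Matrix m m ℂ)) fun U hU i _ j _ => by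
      simpa using entry_norm_bound_of_unitary hU i j
  exact isCompact_iff_compactSpace.mp this

theorem integral_sum_sum_sum_sum {X ι : Type*} [Fintype ι] [MeasurableSpace X] {μ : Measure X}
    {f : ι → ι → ι → ι → X → ℂ} (hf : ∀ a b c d, Integrable (f a b c d) μ) :
    ∫ t, ∑ a, ∑ b, ∑ c, ∑ d, f a b c d t ∂μ = ∑ a, ∑ b, ∑ c, ∑ d, ∫ t, f a b c d t ∂μ := by
  rw [integral_finsetSum _ fun a _ => integrable_finsetSum _ fun b _ =>
    integrable_finsetSum _ fun c _ => integrable_finsetSum _ fun d _ => hf a b c d]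
  refine Finset.sum_congr rfl fun a _ => ?_
  rw [integral_finsetSum _ fun b _ =>
    integrable_finsetSum _ fun c _ => integrable_finsetSum _ fun d _ => hf a b c d]
  refine Finset.sum_congr rfl fun b _ => ?_
  rw [integral_finsetSum _ fun c _ => integrable_finsetSum _ fun d _ => hf a b c d]
  exact Finset.sum_congr rfl fun c _ => integral_finsetSum _ fun d _ => hf a b c d

section HaarMoments

variable (μ : Measure (Matrix.unitaryGroup (Fin 2) ℂ))

/-- The mixed fourth moment of the entries of row `z` of a random unitary. -/
noncomputable def rowMoment (z a b c d : Fin 2) : ℂ :=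
  ∫ U, U.1 z a * conj (U.1 z b) * (U.1 z c * conj (U.1 z d)) ∂μ

theorem integrable_rowMoment [IsFiniteMeasure μ] (z a b c d : Fin 2) :
    Integrable (fun U : Matrix.unitaryGroup (Fin 2) ℂ =>
      U.1 z a * conj (U.1 z b) * (U.1 z c * conj (U.1 z d))) μ := by
  have hcont (a : Fin 2) : Continuous fun U : Matrix.unitaryGroup (Fin 2) ℂ => U.1 z a :=
    continuous_subtype_val.matrix_elem z a
  have hconj (a : Fin 2) :
      Continuous fun U : Matrix.unitaryGroup (Fin 2) ℂ => conj (U.1 z a) :=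
    Complex.continuous_conj.comp (hcont a)
  exact (((hcont a).mul (hconj b)).mul ((hcont c).mul (hconj d))).integrable_of_hasCompactSupport
    (HasCompactSupport.of_compactSpace _)

variable [μ.IsHaarMeasure] [IsProbabilityMeasure μ]

theorem isMulRightInvariant_unitaryGroup : μ.IsMulRightInvariant where
  map_mul_right_eq_self g := by
    have : IsProbabilityMeasure (μ.map (· * g)) :=
      Measure.isProbabilityMeasure_map (measurable_mul_const g).aemeasurable
    exact Measure.isHaarMeasure_eq_of_isProbabilityMeasure _ _

theorem rowMoment_eq_sum (W : Matrix.unitaryGroup (Fin 2) ℂ) (z a b c d : Fin 2) :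
    rowMoment μ z a b c d = ∑ a', ∑ b', ∑ c', ∑ d',
      W.1 a' a * conj (W.1 b' b) * (W.1 c' c * conj (W.1 d' d)) * rowMoment μ z a' b' c' d' := by
  have := isMulRightInvariant_unitaryGroup μ
  have hint := integrable_rowMoment μ z
  unfold rowMoment
  rw [← integral_mul_right_eq_self (fun U : Matrix.unitaryGroup (Fin 2) ℂ =>
    U.1 z a * conj (U.1 z b) * (U.1 z c * conj (U.1 z d))) W]
  simp_rw [← integral_const_mul]
  rw [← integral_sum_sum_sum_sum fun a' b' c' d' => (hint a' b' c' d').const_mul _]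
  refine integral_congr_ae (.of_forall fun U => ?_)
  simp only [Matrix.UnitaryGroup.mul_val, Matrix.mul_apply, Fin.sum_univ_two, map_add, map_mul]
  ring

omit [μ.IsHaarMeasure] in
theorem sum_rowMoment (z : Fin 2) : ∑ a, ∑ c, rowMoment μ z a a c c = 1 := by
  unfold rowMoment
  have hint := integrable_rowMoment μ z
  simp_rw [← integral_finsetSum Finset.univ fun _ _ => hint _ _ _ _]
  rw [← integral_finsetSum]
  swap
  · exact fun a _ => integrable_finsetSum _ fun c _ => hint a a c c
  have (U : Matrix.unitaryGroup (Fin 2) ℂ) :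
      ∑ a, ∑ c, U.1 z a * conj (U.1 z a) * (U.1 z c * conj (U.1 z c)) = 1 := by
    have h : ∑ a, U.1 z a * conj (U.1 z a) = 1 := by
      have := congrFun₂ (Matrix.mem_unitaryGroup_iff.mp U.2) z z
      simpa [Matrix.mul_apply, Matrix.star_apply] using this
    rw [← Finset.sum_mul_sum, h, one_mul]
  simp_rw [this]
  simp

omit [μ.IsHaarMeasure] [IsProbabilityMeasure μ] in
theorem rowMoment_swap_left (z a b c d : Fin 2) :
    rowMoment μ z a b c d = rowMoment μ z c b a d := by
  unfold rowMoment; congr! 2; ring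

omit [μ.IsHaarMeasure] [IsProbabilityMeasure μ] in
theorem rowMoment_swap_right (z a b c d : Fin 2) :
    rowMoment μ z a b c d = rowMoment μ z a d c b := by
  unfold rowMoment; congr! 2; ring

/-- The second-moment formula `𝔼[(U†|z⟩⟨z|U)^{⊗2}] = (I + SWAP) / 6`. -/
theorem rowMoment_eq (z a b c d : Fin 2) :
    rowMoment μ z a b c d =
      ((if a = d ∧ b = c then 1 else 0) + (if a = b ∧ c = d then 1 else 0)) / 6 := by
  have hphase : !![1, 0; 0, Complex.I] ∈ Matrix.unitaryGroup (Fin 2) ℂ := by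
    rw [Matrix.mem_unitaryGroup_iff]
    ext i j; fin_cases i <;> fin_cases j <;> simp [Matrix.mul_apply, Matrix.star_apply]
  have hflip : !![0, 1; 1, 0] ∈ Matrix.unitaryGroup (Fin 2) ℂ := by
    rw [Matrix.mem_unitaryGroup_iff]
    ext i j; fin_cases i <;> fin_cases j <;> simp [Matrix.mul_apply, Matrix.star_apply]
  -- a rational rotation, avoiding the square root in the Hadamard matrix
  have hrot : !![(3 / 5 : ℂ), 4 / 5; -4 / 5, 3 / 5] ∈ Matrix.unitaryGroup (Fin 2) ℂ := by
    rw [Matrix.mem_unitaryGroup_iff]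
    ext i j; fin_cases i <;> fin_cases j <;>
      simp [Matrix.mul_apply, Matrix.star_apply, Complex.conj_ofNat] <;> norm_num
  have P := rowMoment_eq_sum μ ⟨_, hphase⟩ z
  have X := rowMoment_eq_sum μ ⟨_, hflip⟩ z 0 0 0 0
  have R := rowMoment_eq_sum μ ⟨_, hrot⟩ z 0 0 0 0
  have N := sum_rowMoment μ z
  have fixed_I (w : ℂ) : w = Complex.I * w ↔ w = 0 := by
    simp only [Complex.ext_iff, Complex.mul_re, Complex.mul_im,
      Complex.I_re, Complex.I_im, Complex.zero_re, Complex.zero_im]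
    constructor <;> rintro ⟨h1, h2⟩ <;> constructor <;> linarith
  have fixed_neg_I (w : ℂ) : w = -(Complex.I * w) ↔ w = 0 := by
    simp only [Complex.ext_iff, Complex.mul_re, Complex.mul_im, Complex.neg_re, Complex.neg_im,
      Complex.I_re, Complex.I_im, Complex.zero_re, Complex.zero_im]
    constructor <;> rintro ⟨h1, h2⟩ <;> constructor <;> linarith
  simp [Fin.sum_univ_two, Fin.forall_fin_two, fixed_I, fixed_neg_I, self_eq_neg] at P
  obtain ⟨⟨⟨m0001, m0010⟩, ⟨m0100, m0101⟩, m0111⟩, ⟨m1000, m1010, m1011⟩, m1101, m1110⟩ := P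
  have m1001 := rowMoment_swap_left μ z 1 0 0 1
  have m0110 := rowMoment_swap_right μ z 0 1 1 0
  have m1100 := (rowMoment_swap_left μ z 1 1 0 0).trans m0110
  simp [Fin.sum_univ_two] at X
  simp [Fin.sum_univ_two, Complex.conj_ofNat, m0001, m0010, m0100, m0101, m0111, m1000, m1010,
    m1011, m1101, m1110, m1001, m0110, m1100, ← X] at R
  simp [Fin.sum_univ_two, m1100, ← X] at N
  have m0000 : rowMoment μ z 0 0 0 0 = 1 / 3 := by linear_combination N / 3 + 625 / 864 * R
  have m0011 : rowMoment μ z 0 0 1 1 = 1 / 6 := by linear_combination N / 2 - m0000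
  have m1111 : rowMoment μ z 1 1 1 1 = 1 / 3 := X.symm.trans m0000
  fin_cases a <;> fin_cases b <;> fin_cases c <;> fin_cases d <;>
    simp [m0001, m0010, m0100, m0101, m0111, m1000, m1010, m1011, m1101, m1110, m1001, m0110,
      m1100, m0000, m0011, m1111] <;> norm_num

end HaarMoments

/-- The weight of `ρ ⊗ ρ` against the product kernel `k`. -/
noncomputable def quadSum {n : ℕ} (ρ : QMat n)
    (k : Fin n → Fin 2 → Fin 2 → Fin 2 → Fin 2 → ℂ) : ℂ :=
  ∑ x, ∑ x', ∑ y, ∑ y', ρ x y * ρ x' y' * ∏ i, k i (x i) (y i) (x' i) (y' i)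

theorem sum_embedIdx {n : ℕ} (α : Finset (Fin n)) (f : (Fin n → Fin 2) → ℂ) :
    ∑ x, f x = ∑ i, ∑ k, f (embedIdx α i k) := by
  rw [← (Equiv.piEquivPiSubtypeProd (· ∈ α) fun _ => Fin 2).symm.sum_comp, Fintype.sum_prod_type]
  rfl

/-- The purity of a marginal is the expectation of the partial swap on `α`. -/
theorem trace_reduced_mul_self {n : ℕ} (ρ : QMat n) (α : Finset (Fin n)) :
    Matrix.trace (reduced ρ α * reduced ρ α) = quadSum ρ fun i a b c d =>
      if i ∈ α then (if a = d ∧ b = c then 1 else 0) else (if a = b ∧ c = d then 1 else 0) := by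
  have hprod (i j i' j' : {x // x ∈ α} → Fin 2) (k l k' l' : {x // x ∉ α} → Fin 2) :
      (∏ t, if t ∈ α then
          (if embedIdx α i k t = embedIdx α j' l' t ∧ embedIdx α j l t = embedIdx α i' k' t
            then (1 : ℂ) else 0)
        else (if embedIdx α i k t = embedIdx α j l t ∧ embedIdx α i' k' t = embedIdx α j' l' t
            then 1 else 0)) =
      if l' = k' then if j' = i then if i' = j then if l = k then 1 else 0 else 0 else 0 else 0 := by
    rw [← Fintype.prod_subtype_mul_prod_subtype (· ∈ α)]
    have h1 (t : {x // x ∈ α}) : t.1 ∈ α := t.2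
    have h2 (t : {x // x ∉ α}) : t.1 ∉ α := t.2
    simp only [embedIdx, h1, h2, dif_pos, if_true, dif_neg, if_false, not_false_eq_true]
    simp only [Finset.prod_ite_zero, Finset.prod_const_one, Finset.mem_univ, forall_const,
      forall_and, ← funext_iff]
    split_ifs <;> simp_all
  simp only [quadSum, sum_embedIdx α]
  simp only [hprod, mul_ite, mul_one, mul_zero, Finset.sum_ite_eq, Finset.sum_ite_eq', Finset.sum_ite_irrel,
    Finset.sum_const_zero, Finset.mem_univ, if_true]
  simp only [Matrix.trace, Matrix.diag, Matrix.mul_apply, reduced, Finset.sum_mul_sum]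
  exact Finset.sum_congr rfl fun x _ => Finset.sum_comm

theorem sum_sum_prod {n : ℕ} (g : Fin n → Fin 2 → Fin 2 → ℂ) :
    ∑ u : Fin n → Fin 2, ∑ v : Fin n → Fin 2, ∏ i, g i (u i) (v i) = ∏ i, ∑ a, ∑ b, g i a b := by
  simp_rw [Fintype.prod_sum]

/-- The factor on qubit `i` of the matrix element of `U† |z⟩⟨z| U`. -/
noncomputable def bornKernel {n : ℕ} (S : Finset (Fin n))
    (V : {i : Fin n // i ∈ S} → Matrix (Fin 2) (Fin 2) ℂ) (z : {i : Fin n // i ∈ S} → Fin 2)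
    (i : Fin n) (a b : Fin 2) : ℂ :=
  if h : i ∈ S then V ⟨i, h⟩ (z ⟨i, h⟩) a * conj (V ⟨i, h⟩ (z ⟨i, h⟩) b)
  else if a = b then 1 else 0

theorem trace_localOp_projZ {n : ℕ} (ρ : QMat n) (S : Finset (Fin n))
    (V : {i : Fin n // i ∈ S} → Matrix (Fin 2) (Fin 2) ℂ) (z : {i : Fin n // i ∈ S} → Fin 2) :
    Matrix.trace (localOp S V * ρ * (localOp S V)ᴴ * projZ S z) =
      ∑ x, ∑ y, ρ x y * ∏ i, bornKernel S V z i (x i) (y i) := by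
  have hk (x y : Fin n → Fin 2) : ∏ i, bornKernel S V z i (x i) (y i) =
      ((localOp S V)ᴴ * projZ S z * localOp S V) y x := by
    simp only [Matrix.mul_apply, Matrix.conjTranspose_apply, Finset.sum_mul, localOp, projZ,
      star_prod, ← Finset.prod_mul_distrib]
    rw [sum_sum_prod fun i a b => star (if h : i ∈ S then V ⟨i, h⟩ b (y i)
        else (if b = y i then 1 else 0)) * (if h : i ∈ S then
          (if b = z ⟨i, h⟩ ∧ a = z ⟨i, h⟩ then 1 else 0) else (if b = a then 1 else 0)) *
        (if h : i ∈ S then V ⟨i, h⟩ a (x i) else (if a = x i then 1 else 0))]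
    refine Finset.prod_congr rfl fun i _ => ?_
    by_cases h : i ∈ S
    · simp [bornKernel, h, ite_and, mul_comm]
    · simp [bornKernel, h, eq_comm]
  rw [Matrix.mul_assoc, Matrix.mul_assoc, Matrix.trace_mul_comm, Matrix.mul_assoc]
  simp only [hk, Matrix.trace, Matrix.diag, Matrix.mul_apply (M := ρ)]

theorem ofReal_born {n : ℕ} {ρ : QMat n} (hρ : ρ.IsHermitian) (S : Finset (Fin n))
    (V : {i : Fin n // i ∈ S} → Matrix.unitaryGroup (Fin 2) ℂ)
    (z : {i : Fin n // i ∈ S} → Fin 2) :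
    (born ρ S V z : ℂ) = ∑ x, ∑ y, ρ x y * ∏ i, bornKernel S (fun i => (V i).1) z i (x i) (y i) := by
  rw [born, trace_localOp_projZ]
  refine Complex.conj_eq_iff_re.mp ?_
  simp only [map_sum, map_mul, map_prod]
  rw [Finset.sum_comm]
  refine Finset.sum_congr rfl fun x _ => Finset.sum_congr rfl fun y _ => ?_
  rw [← hρ.apply x y]
  congr 1
  refine Finset.prod_congr rfl fun i _ => ?_
  unfold bornKernel
  split_ifs <;> simp_all [mul_comm]

theorem prod_eq_prod_mem_mul_prod_notMem {n : ℕ} (S : Finset (Fin n)) (f : Fin n → ℂ) :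
    ∏ i, f i = (∏ i : {i // i ∈ S}, f i) * ∏ i : {i // i ∉ S}, f i := by
  rw [← Fintype.prod_subtype_mul_prod_subtype (· ∈ S)]
  congr!

theorem integral_born_sq {n : ℕ} {ρ : QMat n} (hρ : ρ.IsHermitian) (S : Finset (Fin n))
    (z : {i : Fin n // i ∈ S} → Fin 2)
    (μ : Measure (Matrix.unitaryGroup (Fin 2) ℂ)) [μ.IsHaarMeasure] [IsProbabilityMeasure μ] :
    ((∫ V, born ρ S V z ^ 2 ∂(Measure.pi fun _ : {i : Fin n // i ∈ S} => μ) : ℝ) : ℂ) =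
      quadSum ρ fun i a b c d =>
        if i ∈ S then
          ((if a = d ∧ b = c then 1 else 0) + (if a = b ∧ c = d then 1 else 0)) / 6
        else if a = b ∧ c = d then 1 else 0 := by
  have hint (x y x' y' : Fin n → Fin 2) (i : {i : Fin n // i ∈ S}) :=
    integrable_rowMoment μ (z i) (x i) (y i) (x' i) (y' i)
  have hsplit (V : {i : Fin n // i ∈ S} → Matrix.unitaryGroup (Fin 2) ℂ)
      (x y x' y' : Fin n → Fin 2) :
      (∏ i, bornKernel S (fun i => (V i).1) z i (x i) (y i)) *
        ∏ i, bornKernel S (fun i => (V i).1) z i (x' i) (y' i) =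
      (∏ i : {i // i ∈ S}, (V i).1 (z i) (x i) * conj ((V i).1 (z i) (y i)) *
        ((V i).1 (z i) (x' i) * conj ((V i).1 (z i) (y' i)))) *
      ∏ i : {i // i ∉ S}, if x i = y i ∧ x' i = y' i then 1 else 0 := by
    rw [← Finset.prod_mul_distrib, prod_eq_prod_mem_mul_prod_notMem S]
    congr 1 <;> refine Finset.prod_congr rfl fun i _ => ?_
    · simp [bornKernel, i.2]
    · simp only [bornKernel, dif_neg i.2]
      split_ifs <;> simp_all
  have hterm (V : {i : Fin n // i ∈ S} → Matrix.unitaryGroup (Fin 2) ℂ) :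
      ((born ρ S V z ^ 2 : ℝ) : ℂ) = ∑ x, ∑ x', ∑ y, ∑ y', ρ x y * ρ x' y' *
        ((∏ i : {i // i ∈ S}, (V i).1 (z i) (x i) * conj ((V i).1 (z i) (y i)) *
          ((V i).1 (z i) (x' i) * conj ((V i).1 (z i) (y' i)))) *
        ∏ i : {i // i ∉ S}, if x i = y i ∧ x' i = y' i then 1 else 0) := by
    rw [Complex.ofReal_pow, ofReal_born hρ, sq]
    simp_rw [Finset.sum_mul_sum]
    refine Finset.sum_congr rfl fun x _ => Finset.sum_congr rfl fun x' _ =>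
      Finset.sum_congr rfl fun y _ => Finset.sum_congr rfl fun y' _ => ?_
    rw [mul_mul_mul_comm, hsplit]
  have hI (x x' y y' : Fin n → Fin 2) :=
    ((Integrable.fintype_prod (μ := fun _ => μ) (hint x y x' y')).mul_const
      (∏ i : {i // i ∉ S}, if x i = y i ∧ x' i = y' i then (1 : ℂ) else 0)).const_mul
      (ρ x y * ρ x' y')
  rw [← integral_complex_ofReal]
  simp_rw [hterm]
  rw [integral_sum_sum_sum_sum hI]
  refine Finset.sum_congr rfl fun x _ => Finset.sum_congr rfl fun x' _ =>
    Finset.sum_congr rfl fun y _ => Finset.sum_congr rfl fun y' _ => ?_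
  rw [integral_const_mul, integral_mul_const,
    integral_fintype_prod_eq_prod (μ := fun _ => μ)
      (fun (i : {i // i ∈ S}) (U : Matrix.unitaryGroup (Fin 2) ℂ) =>
        U.1 (z i) (x i) * conj (U.1 (z i) (y i)) * (U.1 (z i) (x' i) * conj (U.1 (z i) (y' i)))),
    prod_eq_prod_mem_mul_prod_notMem S]
  congr 2 <;> refine Finset.prod_congr rfl fun i _ => ?_
  · exact (rowMoment_eq μ _ _ _ _ _).trans (if_pos i.2).symm
  · exact (if_neg i.2).symm

theorem prod_ite_add_eq_sum_powerset {ι R : Type*} [Fintype ι] [DecidableEq ι] [CommSemiring R]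
    (S : Finset ι) (A B : ι → R) :
    ∏ i, (if i ∈ S then B i + A i else A i) =
      ∑ α ∈ S.powerset, ∏ i, if i ∈ α then B i else A i := by
  have h (i : ι) : (if i ∈ S then B i + A i else A i) = (if i ∈ S then B i else 0) + A i := by
    split_ifs <;> simp
  simp_rw [h, Fintype.prod_add]
  rw [← Finset.sum_subset (Finset.subset_univ S.powerset)]
  · refine Finset.sum_congr rfl fun α hα => ?_
    rw [← Finset.prod_mul_prod_compl α fun i => if i ∈ α then B i else A i]
    congr 1 <;> refine Finset.prod_congr rfl fun i hi => ?_
    · rw [if_pos hi, if_pos (Finset.mem_powerset.mp hα hi)]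
    · rw [if_neg (Finset.mem_compl.mp hi)]
  · intro α _ hα
    obtain ⟨i, hi, hiS⟩ := Finset.not_subset.mp (mt Finset.mem_powerset.mpr hα)
    rw [Finset.prod_eq_zero hi (if_neg hiS), zero_mul]

theorem quadSum_swap_expansion {n : ℕ} (ρ : QMat n) (S : Finset (Fin n)) :
    (2 ^ S.card : ℂ) * quadSum ρ (fun i a b c d =>
        if i ∈ S then
          ((if a = d ∧ b = c then 1 else 0) + (if a = b ∧ c = d then 1 else 0)) / 6
        else if a = b ∧ c = d then 1 else 0) =
      (1 / 3) ^ S.card * ∑ α ∈ S.powerset, Matrix.trace (reduced ρ α * reduced ρ α) := by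
  have hscale (A B : Fin n → ℂ) :
      (2 : ℂ) ^ S.card * ∏ i, (if i ∈ S then (B i + A i) / 6 else A i) =
        (1 / 3) ^ S.card * ∑ α ∈ S.powerset, ∏ i, if i ∈ α then B i else A i := by
    rw [← prod_ite_add_eq_sum_powerset, ← Finset.prod_mul_prod_compl S,
      ← Finset.prod_mul_prod_compl S fun i => if i ∈ S then B i + A i else A i,
      ← mul_assoc, ← mul_assoc, ← Finset.prod_const, ← Finset.prod_const,
      ← Finset.prod_mul_distrib, ← Finset.prod_mul_distrib]
    congr 1 <;> refine Finset.prod_congr rfl fun i hi => ?_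
    · simp only [if_pos hi]
      ring
    · simp only [if_neg (Finset.mem_compl.mp hi)]
  simp_rw [trace_reduced_mul_self, quadSum]
  rw [Finset.sum_comm (s := S.powerset), Finset.mul_sum, Finset.mul_sum]
  refine Finset.sum_congr rfl fun x _ => ?_
  rw [Finset.sum_comm (s := S.powerset), Finset.mul_sum, Finset.mul_sum]
  refine Finset.sum_congr rfl fun x' _ => ?_
  rw [Finset.sum_comm (s := S.powerset), Finset.mul_sum, Finset.mul_sum]
  refine Finset.sum_congr rfl fun y _ => ?_
  rw [Finset.sum_comm (s := S.powerset), Finset.mul_sum, Finset.mul_sum]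
  refine Finset.sum_congr rfl fun y' _ => ?_
  rw [← Finset.mul_sum, mul_left_comm, hscale, mul_left_comm]

/-- **CEs via LRMs (uniform average over bitstrings)**:
`C_ψ(S) = 1 - (3/2)^s ∑_z 𝔼_U[P_U(z)²]`. -/
theorem CE_eq_LRM_all_strings (n : ℕ) (ψ : (Fin n → Fin 2) → ℂ)
    (hψ : (∑ x, star (ψ x) * ψ x) = 1)
    (S : Finset (Fin n)) (hS : S.Nonempty)
    (μ : Measure (Matrix.unitaryGroup (Fin 2) ℂ)) [μ.IsHaarMeasure] [IsProbabilityMeasure μ] :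
    CE (Matrix.vecMulVec ψ (star ψ)) S
      = 1 - (3 / 2 : ℝ) ^ S.card *
        ∑ z : ({i : Fin n // i ∈ S} → Fin 2),
          ∫ V : ({i : Fin n // i ∈ S} → Matrix.unitaryGroup (Fin 2) ℂ),
            (born (Matrix.vecMulVec ψ (star ψ)) S V z) ^ 2
            ∂(Measure.pi fun _ : {i : Fin n // i ∈ S} => μ) := by
  have hρ : (Matrix.vecMulVec ψ (star ψ)).IsHermitian := by
    simp [Matrix.IsHermitian, Matrix.conjTranspose_vecMulVec]
  set ρ := Matrix.vecMulVec ψ (star ψ)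
  have key : ∑ z : ({i : Fin n // i ∈ S} → Fin 2), ∫ V, born ρ S V z ^ 2
        ∂(Measure.pi fun _ : {i : Fin n // i ∈ S} => μ) =
      (1 / 3 : ℝ) ^ S.card *
        ∑ α ∈ S.powerset, (Matrix.trace (reduced ρ α * reduced ρ α)).re := by
    have h := congrArg Complex.re (quadSum_swap_expansion ρ S)
    rw [← Complex.re_sum, ← Complex.re_ofReal_mul]
    push_cast
    rw [← h, ← Complex.ofReal_re (∑ z, _)]
    push_cast
    simp_rw [integral_born_sq hρ S _ μ]
    simp
  rw [CE, key, ← mul_assoc, ← mul_pow]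
  norm_num
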